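/- Let B' be a k×n complex matrix with rows Z₁,…,Z_k and for each j let H_j be the span of all rows except the j-th. Then ∑_{j=1}^k s_j(B')^{−2} = ∑_{j=1}^k dist(Z_j, H_j)^{−2}, where s_j(B') are the nonzero singular values of B' (assuming B' has full rank k). -/

import Mathlib

/-- The singular values of a rectangular complex matrix, in nonincreasing order:
the square roots of the eigenvalues of B * Bᴴ, sorted nonincreasingly. -/
noncomputable def svals {k n : ℕ} (B : Matrix (Fin k) (Fin n) ℂ) : Fin k → ℝ :=
  fun i =>
    Real.sqrt ((Matrix.isHermitian_mul_conjTranspose_self B).eigenvalues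
      (Tuple.sort (Matrix.isHermitian_mul_conjTranspose_self B).eigenvalues i.rev))

/-!
Both sides are the trace of the inverse of the Gram matrix `G` of the rows. On the spectral side
this is the sum of the inverses of the eigenvalues of `G`, which are the squared singular values.
On the geometric side, the dual family `w` of the rows has Gram matrix `G⁻¹`, so `‖w j‖ ^ 2` is the
`j`-th diagonal entry of `G⁻¹`; and `w j` is normal to the span of the other rows while its inner
product with the `j`-th row is `1`, so the distance from that row to that span is `‖w j‖⁻¹`.
-/

open Matrix
open scoped InnerProductSpace ComplexOrder

section Distance

variable {𝕜 E : Type*} [RCLike 𝕜] [NormedAddCommGroup E] [InnerProductSpace 𝕜 E]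
  {K : Submodule 𝕜 E} {x y w : E}

lemma infDist_eq_norm_sub_of_sub_mem_orthogonal (hy : y ∈ K) (hxy : x - y ∈ Kᗮ) :
    Metric.infDist x K = ‖x - y‖ := by
  rw [(K.norm_eq_iInf_iff_inner_eq_zero hy).2 (K.mem_orthogonal' _ |>.1 hxy),
    Metric.infDist_eq_iInf]
  exact iInf_congr fun z ↦ dist_eq_norm x z

lemma infDist_eq_inv_norm_of_inner_eq_one (hw : w ∈ Kᗮ) (hw' : w ∈ K ⊔ 𝕜 ∙ x)
    (hxw : ⟪x, w⟫_𝕜 = 1) : Metric.infDist x K = ‖w‖⁻¹ := by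
  have hw0 : w ≠ 0 := by
    rintro rfl
    simp at hxw
  obtain ⟨y, hy, _, hcx, hyw⟩ := Submodule.mem_sup.1 hw'
  obtain ⟨c, rfl⟩ := Submodule.mem_span_singleton.1 hcx
  have hc : c = (‖w‖ : 𝕜) ^ 2 := calc
    c = ⟪w, y + c • x⟫_𝕜 := by
      rw [inner_add_right, K.inner_left_of_mem_orthogonal hy hw, inner_smul_right,
        ← inner_conj_symm, hxw, map_one, mul_one, zero_add]
    _ = (‖w‖ : 𝕜) ^ 2 := by rw [hyw, inner_self_eq_norm_sq_to_K]
  have hc0 : c ≠ 0 := by simpa [hc] using hw0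
  have hsub : x - -(c⁻¹ • y) = c⁻¹ • w := by
    rw [← hyw, smul_add, inv_smul_smul₀ hc0, sub_neg_eq_add, add_comm]
  rw [infDist_eq_norm_sub_of_sub_mem_orthogonal (K.neg_mem (K.smul_mem _ hy))
    (hsub ▸ Kᗮ.smul_mem _ hw), hsub, norm_smul, norm_inv, hc, norm_pow, RCLike.norm_ofReal,
    abs_norm]
  field [norm_ne_zero_iff.2 hw0]

end Distance

section GramDual

variable {𝕜 E ι : Type*} [RCLike 𝕜] [NormedAddCommGroup E] [InnerProductSpace 𝕜 E]
  [Fintype ι] [DecidableEq ι] {v : ι → E}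

variable (𝕜) in
/-- The dual family of a linearly independent finite family `v`: the vectors of the span of `v`
which are biorthogonal to `v`. It is encoded through the inverse of the Gram matrix, so that it
is `0` when `v` is linearly dependent. -/
noncomputable def gramDual (v : ι → E) (j : ι) : E :=
  ∑ i, (gram 𝕜 v)⁻¹ i j • v i

lemma gramDual_mem_span (v : ι → E) (j : ι) :
    gramDual 𝕜 v j ∈ Submodule.span 𝕜 (Set.range v) :=
  Submodule.sum_mem _ fun i _ ↦ Submodule.smul_mem _ _ (Submodule.subset_span ⟨i, rfl⟩)

lemma inner_gramDual (hv : LinearIndependent 𝕜 v) (i j : ι) :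
    ⟪v i, gramDual 𝕜 v j⟫_𝕜 = (1 : Matrix ι ι 𝕜) i j := by
  have hdet : IsUnit (gram 𝕜 v).det := (det_gram_ne_zero_iff_linearIndependent.2 hv).isUnit
  rw [← mul_nonsing_inv _ hdet, mul_apply]
  simp only [gramDual, inner_sum, inner_smul_right, gram_apply, mul_comm]

lemma gram_gramDual (hv : LinearIndependent 𝕜 v) :
    gram 𝕜 (gramDual 𝕜 v) = (gram 𝕜 v)⁻¹ := by
  ext i j
  calc ⟪gramDual 𝕜 v i, gramDual 𝕜 v j⟫_𝕜
      = ∑ l, star ((gram 𝕜 v)⁻¹ l i) * ⟪v l, gramDual 𝕜 v j⟫_𝕜 := by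
        simp only [gramDual, sum_inner, inner_smul_left, starRingEnd_apply]
    _ = star ((gram 𝕜 v)⁻¹ j i) := by simp [inner_gramDual hv, one_apply]
    _ = (gram 𝕜 v)⁻¹ i j := (isHermitian_gram 𝕜 v).inv.apply i j

lemma gramDual_mem_orthogonal (hv : LinearIndependent 𝕜 v) (j : ι) :
    gramDual 𝕜 v j ∈ (Submodule.span 𝕜 (v '' {j}ᶜ))ᗮ := by
  rw [← Submodule.span_singleton_le_iff_mem, ← Submodule.isOrtho_iff_le, Submodule.isOrtho_comm,
    Submodule.isOrtho_span]
  rintro _ ⟨i, hij, rfl⟩ _ rfl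
  rw [inner_gramDual hv, one_apply_ne hij]

lemma infDist_span_image_compl_singleton (hv : LinearIndependent 𝕜 v) (j : ι) :
    Metric.infDist (v j) (Submodule.span 𝕜 (v '' {j}ᶜ)) = ‖gramDual 𝕜 v j‖⁻¹ := by
  have hspan : Submodule.span 𝕜 (v '' {j}ᶜ) ⊔ 𝕜 ∙ v j = Submodule.span 𝕜 (Set.range v) := by
    rw [← Submodule.span_union, ← Set.image_singleton, ← Set.image_union, Set.compl_union_self,
      Set.image_univ]
  exact infDist_eq_inv_norm_of_inner_eq_one (gramDual_mem_orthogonal hv j)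
    (hspan ▸ gramDual_mem_span v j) (by rw [inner_gramDual hv, one_apply_eq])

lemma trace_inv_gram_eq_sum_inv_sq_infDist (hv : LinearIndependent 𝕜 v) :
    (gram 𝕜 v)⁻¹.trace =
      ((∑ j, (Metric.infDist (v j) (Submodule.span 𝕜 (v '' {j}ᶜ)) ^ 2)⁻¹ : ℝ) : 𝕜) := by
  simp only [← gram_gramDual hv, trace, diag_apply, gram_apply, inner_self_eq_norm_sq_to_K,
    infDist_span_image_compl_singleton hv, inv_pow, inv_inv, RCLike.ofReal_sum, RCLike.ofReal_pow]

end GramDual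

section Eigenvalues

variable {𝕜 ι : Type*} [RCLike 𝕜] [Fintype ι] [DecidableEq ι] {A : Matrix ι ι 𝕜}

lemma trace_cfc_eq_sum_eigenvalues (hA : A.IsHermitian) (f : ℝ → ℝ) :
    (cfc f A).trace = ((∑ i, f (hA.eigenvalues i) : ℝ) : 𝕜) := by
  rw [hA.cfc_eq, IsHermitian.cfc, Unitary.conjStarAlgAut_apply, trace_mul_cycle,
    Unitary.coe_star_mul_self, one_mul, trace_diagonal, RCLike.ofReal_sum]
  rfl

lemma trace_inv_eq_sum_inv_eigenvalues (hA : A.IsHermitian) (hunit : IsUnit A) :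
    A⁻¹.trace = ((∑ i, (hA.eigenvalues i)⁻¹ : ℝ) : 𝕜) := by
  rw [nonsing_inv_eq_ringInverse, ← cfc_ringInverse_id (R := ℝ) A hunit hA.isSelfAdjoint,
    trace_cfc_eq_sum_eigenvalues hA]

end Eigenvalues

section Rows

lemma linearIndependent_row_iff_rank_eq_card {m n K : Type*} [Field K] [Fintype m] [Fintype n]
    {M : Matrix m n K} : LinearIndependent K M.row ↔ M.rank = Fintype.card m := by
  rw [linearIndependent_iff_card_eq_finrank_span, Set.finrank, ← rank_eq_finrank_span_row, eq_comm]

lemma linearIndependent_toLp_row_iff_rank_eq_card {m n 𝕜 : Type*} [RCLike 𝕜] [Fintype m]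
    [Fintype n] (M : Matrix m n 𝕜) :
    LinearIndependent 𝕜 (fun i ↦ WithLp.toLp 2 (M i)) ↔ M.rank = Fintype.card m := by
  rw [← linearIndependent_row_iff_rank_eq_card]
  exact (WithLp.linearEquiv 2 𝕜 (n → 𝕜)).symm.toLinearMap.linearIndependent_iff
    (LinearEquiv.ker _)

lemma gram_toLp_row {m n 𝕜 : Type*} [RCLike 𝕜] [Fintype n] (M : Matrix m n 𝕜) :
    gram 𝕜 (fun i ↦ WithLp.toLp 2 (M i)) = (M * Mᴴ)ᵀ := by
  ext i j
  simp [PiLp.inner_apply, mul_apply]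

lemma eigenvalues_gram_toLp_row {m n 𝕜 : Type*} [RCLike 𝕜] [Fintype m] [DecidableEq m]
    [Fintype n] (M : Matrix m n 𝕜) :
    (isHermitian_gram 𝕜 fun i ↦ WithLp.toLp 2 (M i)).eigenvalues =
      (isHermitian_mul_conjTranspose_self M).eigenvalues := by
  rw [IsHermitian.eigenvalues_eq_eigenvalues_iff, gram_toLp_row, charpoly_transpose]

lemma sum_comp_sq_svals {k n : ℕ} {α : Type*} [AddCommMonoid α] (B : Matrix (Fin k) (Fin n) ℂ)
    (f : ℝ → α) :
    ∑ j, f (svals B j ^ 2) = ∑ j, f ((isHermitian_mul_conjTranspose_self B).eigenvalues j) := by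
  simp only [svals, Real.sq_sqrt (eigenvalues_self_mul_conjTranspose_nonneg B _)]
  exact Equiv.sum_comp (Fin.revPerm.trans (Tuple.sort _)) (f <| IsHermitian.eigenvalues _ ·)

end Rows

-- The eigenvalues of the Gram matrix are the squared singular values of `c ↦ ∑ i, c i • v i`.
theorem stmt13_general {𝕜 E ι : Type*} [RCLike 𝕜] [NormedAddCommGroup E] [InnerProductSpace 𝕜 E]
    [Fintype ι] [DecidableEq ι] {v : ι → E} (hv : LinearIndependent 𝕜 v) :
    ∑ j, ((isHermitian_gram 𝕜 v).eigenvalues j)⁻¹ =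
      ∑ j, (Metric.infDist (v j) (Submodule.span 𝕜 (v '' {j}ᶜ)) ^ 2)⁻¹ := by
  apply RCLike.ofReal_injective (K := 𝕜)
  rw [← trace_inv_eq_sum_inv_eigenvalues _ (posDef_gram_of_linearIndependent hv).isUnit,
    trace_inv_gram_eq_sum_inv_sq_infDist hv]

/-- Negative second moment identity (Tao–Vu): for a full rank k×n matrix with rows Z_j,
∑ⱼ sⱼ(B)⁻² = ∑ⱼ dist(Z_j, span of the other rows)⁻². -/
theorem stmt13 {k n : ℕ} (hk : 0 < k) (hkn : k ≤ n)
    (B : Matrix (Fin k) (Fin n) ℂ) (hrank : B.rank = k)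
    (Z : Fin k → EuclideanSpace ℂ (Fin n))
    (hZ : ∀ i, Z i = (EuclideanSpace.equiv (Fin n) ℂ).symm (B i)) :
    ∑ j, ((svals B j) ^ 2)⁻¹
      = ∑ j : Fin k,
          ((Metric.infDist (Z j)
            (Submodule.span ℂ {v | ∃ i, i ≠ j ∧ v = Z i} : Set (EuclideanSpace ℂ (Fin n)))) ^ 2)⁻¹ := by
  obtain rfl : Z = fun i ↦ WithLp.toLp 2 (B i) := funext hZ
  rw [sum_comp_sq_svals B (·⁻¹), ← eigenvalues_gram_toLp_row,
    stmt13_general ((linearIndependent_toLp_row_iff_rank_eq_card B).2 (by simpa))]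
  simp only [Set.image, Set.mem_compl_singleton_iff, eq_comm]
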